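/- Determinantal reduction for multivariate Bessel functions with k perturbed coordinates: For two k-tuples a_1, …, a_k ∈ ℂ and integers b_1 > ⋯ > b_k ∈ {0, …, N−1}, and any λ ∈ ℝ^N with distinct entries, B(μ, λ)/B(ρ, λ) = (−1)^{k(k−1)/2} · (∏_{m≠l}(a_m − b_l))/(Δ(a)Δ(b)) · det( ((a_i − b_i)/(a_i − b_j)) · B(μ_{a_i, b_j}, λ)/B(ρ, λ) )_{i,j=1}^k, where μ := (a_1, a_2, …, a_k, N−1, …, b̂_1, …, b̂_2, …, b̂_k, …, 0) is the N-tuple obtained from ρ = (N−1, …, 0) by removing the coordinates b_1, …, b_k and prepending a_1, …, a_k, and μ_{a,b} := (a, N−1, …, b̂, …, 0) is obtained from ρ by removing the coordinate b and prepending a. -/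

import Mathlib

open MeasureTheory Filter Topology Complex ProbabilityTheory

noncomputable section

namespace GS

/-- Vandermonde determinant `∏_{i<j} (a i - a j)`. -/
def vdm {N : ℕ} (a : Fin N → ℂ) : ℂ :=
  ∏ p : Fin N × Fin N, if p.1 < p.2 then a p.1 - a p.2 else 1

/-- The staircase N-tuple `ρ = (N-1, ..., 1, 0)` as complex numbers. -/
def rhoC (N : ℕ) : Fin N → ℂ := fun i => (N : ℂ) - 1 - ((i : ℕ) : ℂ)

/-- The staircase N-tuple `ρ = (N-1, ..., 1, 0)` as real numbers. -/
def rhoR (N : ℕ) : Fin N → ℝ := fun i => (N : ℝ) - 1 - ((i : ℕ) : ℝ)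

/-- The multivariate Bessel function `B(a, b)` (determinantal formula). -/
def mvBessel {N : ℕ} (a b : Fin N → ℂ) : ℂ :=
  vdm (rhoC N) * Matrix.det (Matrix.of fun i j => Complex.exp (a i * b j)) / (vdm a * vdm b)

/-- The multivariate Bessel generating function of a measure on N-tuples. -/
def besselGF {N : ℕ} (μ : Measure (Fin N → ℝ)) (χ : Fin N → ℝ) (s : Fin N → ℂ) : ℂ :=
  ∫ x, mvBessel s (fun i => (x i : ℂ)) / mvBessel (fun i => (χ i : ℂ)) (fun i => (x i : ℂ)) ∂μ

/-- `φ^I_{χ,N}`: the Bessel generating function with `s j = χ j` for `j ∉ I`. -/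
def besselGFRestrict {N : ℕ} (μ : Measure (Fin N → ℝ)) (χ : Fin N → ℝ)
    (I : Finset (Fin N)) (s : Fin N → ℂ) : ℂ :=
  besselGF μ χ (fun j => if j ∈ I then s j else (χ j : ℂ))

/-- Partial derivative in the i-th coordinate. -/
def pderiv {N : ℕ} (f : (Fin N → ℂ) → ℂ) (i : Fin N) (r : Fin N → ℂ) : ℂ :=
  deriv (fun z => f (Function.update r i z)) (r i)

/-- The box `[χ_N, χ_1]^N` viewed inside `ℂ^N`. -/
def realBox {N : ℕ} (χ : Fin N → ℝ) : Set (Fin N → ℂ) :=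
  {s | ∀ i, ∃ t : ℝ, ((⨅ j, χ j) ≤ t ∧ t ≤ (⨆ j, χ j)) ∧ s i = (t : ℂ)}

/-- `χ`-smoothness: absolute and uniform convergence of the defining integral of the
multivariate Bessel generating function on a complex neighborhood of `[χ_N, χ_1]^N`. -/
def BesselSmooth {N : ℕ} (μ : Measure (Fin N → ℝ)) (χ : Fin N → ℝ) : Prop :=
  ∃ V : Set (Fin N → ℂ), IsOpen V ∧ realBox χ ⊆ V ∧
    ∃ G : (Fin N → ℝ) → ℝ, Integrable G μ ∧
      ∀ s ∈ V, ∀ x : Fin N → ℝ,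
        ‖mvBessel s (fun i => (x i : ℂ)) / mvBessel (fun i => (χ i : ℂ)) (fun i => (x i : ℂ))‖ ≤ G x

/-- `(1/N) ∂_{r_i} [log φ^I_{χ,N}(rN)]`. -/
def scaledLogDeriv {N : ℕ} (μ : Measure (Fin N → ℝ)) (χ : Fin N → ℝ)
    (I : Finset (Fin N)) (i : Fin N) (r : Fin N → ℂ) : ℂ :=
  ((N : ℂ))⁻¹ *
    pderiv (fun r' => Complex.log (besselGFRestrict μ χ I (fun j => (N : ℂ) * r' j))) i r

/-- `∂_{r_i} ∂_{r_j} [log φ^I_{χ,N}(rN)]`. -/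
def logDeriv2 {N : ℕ} (μ : Measure (Fin N → ℝ)) (χ : Fin N → ℝ)
    (I : Finset (Fin N)) (i j : Fin N) (r : Fin N → ℂ) : ℂ :=
  pderiv (fun r' =>
    pderiv (fun r'' => Complex.log (besselGFRestrict μ χ I (fun l => (N : ℂ) * r'' l))) i r') j r

/-- LLN-appropriateness of the measures `μ N` for the N-tuples `χ N`. -/
def LLNAppropriate (μ : ∀ N : ℕ, Measure (Fin N → ℝ)) (χ : ∀ N : ℕ, Fin N → ℝ)
    (Vχ : Set ℝ) (U : Set ℂ) (Ψ : ℂ → ℂ) : Prop :=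
  (∀ N, BesselSmooth (μ N) (χ N)) ∧
  IsCompact Vχ ∧ IsOpen U ∧ ((fun x : ℝ => (x : ℂ)) '' Vχ) ⊆ U ∧
  DifferentiableOn ℂ Ψ U ∧
  (∀ N : ℕ, ∀ i : Fin N, χ N i / N ∈ Vχ) ∧
  (∀ k : ℕ, 0 < k → ∀ ε : ℝ, 0 < ε → ∀ᶠ N : ℕ in atTop,
    ∀ I : Finset (Fin N), I.card = k → ∀ i ∈ I, ∀ r : Fin N → ℂ,
      (∀ j ∈ I, r j ∈ U) → ‖scaledLogDeriv (μ N) (χ N) I i r - Ψ (r i)‖ < ε)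

/-- CLT-appropriateness of the measures `μ N` for the N-tuples `χ N`. -/
def CLTAppropriate (μ : ∀ N : ℕ, Measure (Fin N → ℝ)) (χ : ∀ N : ℕ, Fin N → ℝ)
    (Vχ : Set ℝ) (U : Set ℂ) (Ψ : ℂ → ℂ) (Λ : ℂ → ℂ → ℂ) : Prop :=
  LLNAppropriate μ χ Vχ U Ψ ∧
  DifferentiableOn ℂ (fun p : ℂ × ℂ => Λ p.1 p.2) (U ×ˢ U) ∧
  (∀ k : ℕ, 0 < k → ∀ ε : ℝ, 0 < ε → ∀ᶠ N : ℕ in atTop,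
    ∀ I : Finset (Fin N), I.card = k → ∀ i ∈ I, ∀ j ∈ I, i ≠ j → ∀ r : Fin N → ℂ,
      (∀ l ∈ I, r l ∈ U) → ‖logDeriv2 (μ N) (χ N) I i j r - Λ (r i) (r j)‖ < ε)

/-- The Cauchy transform `Ξ(u) = ∫ 1/(u - x) dχ(x)`. -/
def cauchy (ρm : Measure ℝ) (u : ℂ) : ℂ := ∫ x, (u - (x : ℂ))⁻¹ ∂ρm

/-- Power sums `p_k(x) = x_1^k + ⋯ + x_N^k`. -/
def pSum {N : ℕ} (k : ℕ) (x : Fin N → ℝ) : ℝ := ∑ i, x i ^ k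

/-- Weak convergence of rescaled empirical measures `(1/N) Σ δ_{χ_{N,i}/N}` to `ρm`. -/
def empTendsto (χ : ∀ N : ℕ, Fin N → ℝ) (ρm : Measure ℝ) : Prop :=
  ∀ f : ℝ → ℝ, Continuous f →
    Tendsto (fun N : ℕ => (N : ℝ)⁻¹ * ∑ i : Fin N, f (χ N i / N)) atTop (𝓝 (∫ x, f x ∂ρm))

/-- Weak convergence of the (unrescaled) empirical measures `(1/N) Σ δ_{λ_{N,i}}` to `ρm`. -/
def empTendstoRaw (lam : ∀ N : ℕ, Fin N → ℝ) (ρm : Measure ℝ) : Prop :=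
  ∀ f : ℝ → ℝ, Continuous f →
    Tendsto (fun N : ℕ => (N : ℝ)⁻¹ * ∑ i : Fin N, f (lam N i)) atTop (𝓝 (∫ x, f x ∂ρm))

/-- A measure on ℝ is compactly supported. -/
def CompactSupported (ρm : Measure ℝ) : Prop := ∃ K : Set ℝ, IsCompact K ∧ ρm Kᶜ = 0

/-- A centered jointly Gaussian family with covariance `C`. -/
def IsCenteredGaussianFamily {ι : Type} {Ω : Type} [MeasurableSpace Ω] (P : Measure Ω)
    (G : ι → Ω → ℝ) (C : ι → ι → ℝ) : Prop :=
  IsProbabilityMeasure P ∧ (∀ k, Measurable (G k)) ∧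
    ∀ (m : ℕ) (a : Fin m → ℝ) (k : Fin m → ι),
      P.map (fun ω => ∑ j, a j * G (k j) ω) =
        ProbabilityTheory.gaussianReal 0 (Real.toNNReal (∑ i, ∑ j, a i * a j * C (k i) (k j)))

/-- The moment transform `M_{ρ̃}(z) = ∫ e^x z/(1 - e^x z) dρ(x)`. -/
def MT (ρm : Measure ℝ) (z : ℂ) : ℂ :=
  ∫ x, (Real.exp x : ℂ) * z / (1 - (Real.exp x : ℂ) * z) ∂ρm

/-- Measurable space structure on matrices (the product σ-algebra). -/
instance {m n α : Type*} [MeasurableSpace α] : MeasurableSpace (Matrix m n α) :=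
  inferInstanceAs (MeasurableSpace (m → n → α))

open Classical in
/-- Eigenvalues of a Hermitian matrix (junk value otherwise). -/
def eigs {N : ℕ} (X : Matrix (Fin N) (Fin N) ℂ) : Fin N → ℝ :=
  if h : X.IsHermitian then h.eigenvalues else 0

/-- The log-spectral measure of a random matrix law. -/
def logSpec {N : ℕ} (P : Measure (Matrix (Fin N) (Fin N) ℂ)) : Measure (Fin N → ℝ) :=
  P.map (fun X i => Real.log (eigs X i))

/-- The multivariate Bessel generating function of the log-spectral measure of a random
matrix law, with respect to `ρ = (N-1, ..., 0)`. -/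
def matrixGF {N : ℕ} (P : Measure (Matrix (Fin N) (Fin N) ℂ)) (s : Fin N → ℂ) : ℂ :=
  besselGF (logSpec P) (rhoR N) s

/-- The height function `t ↦ #{i : lam i ≤ t}`. -/
def heightCount {N : ℕ} (lam : Fin N → ℝ) (t : ℝ) : ℝ :=
  ((Finset.univ.filter fun i => lam i ≤ t).card : ℝ)




/-- The `N`-tuple obtained from `ρ = (N-1, …, 0)` by replacing the coordinates at the
positions `e 0 < e 1 < ⋯ < e (k-1)` (i.e. removing the values `b m = N - 1 - e m`) by the
values `a 0, …, a (k-1)`.  Since the multivariate Bessel function is symmetric in the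
entries of its first argument, this represents the tuple
`μ = (a_1, …, a_k, N-1, …, b̂_1, …, b̂_k, …, 0)` of the paper. -/
def perturbMany {N k : ℕ} (a : Fin k → ℂ) (e : Fin k → Fin N) (i : Fin N) : ℂ :=
  if i ∈ Finset.univ.image e then ∑ m, if e m = i then a m else 0 else rhoC N i

/-! Up to the factor `Δ(ρ)/Δ(b)`, the function `B(·, b)` is the quotient of the alternant of the
functions `z ↦ exp(z b_j)` by the Vandermonde determinant, itself an alternant. By the
Weinstein–Aronszajn identity, replacing `k` points of a nonzero alternant multiplies it by the
`k × k` determinant of the factors caused by the single replacements. For the Vandermonde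
determinant those factors are the values of the Lagrange basis polynomials, whose barycentric form
`ℓ(a_i) w_j / (a_i - b_j)` gives a Cauchy determinant times row and column factors. The
exponential alternant produces the same row and column factors, so they cancel and leave
`det((a_i - b_j)⁻¹ R_ij) / det((a_i - b_j)⁻¹)`, where `R_ij` is the ratio of Bessel functions for a
single replacement. -/

section Alternant

open Matrix

variable {R K n κ α : Type*} [CommRing R] [Field K] [DecidableEq n] [Fintype κ]

lemma of_extend_eq_add_mul {e : κ → n} (he : Function.Injective e)
    (r : κ → n → R) (A : Matrix n n R) :
    of (Function.extend e r A.row) =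
      A + (1 : Matrix n n R).submatrix id e * (of r - A.submatrix e id) := by
  classical
  ext p q
  by_cases hp : ∃ i, e i = p
  · obtain ⟨i, rfl⟩ := hp
    rw [of_apply, he.extend_apply]
    simp [mul_apply, one_apply, he.eq_iff]
  · have hp' : ∀ i, p ≠ e i := fun i h => hp ⟨i, h.symm⟩
    rw [of_apply, Function.extend_apply' _ _ _ hp]
    simp [mul_apply, one_apply, hp']

variable [Fintype n] [DecidableEq κ]

lemma vecMul_inv_apply (A : Matrix n n K) (r : n → K) (p : n) :
    (r ᵥ* A⁻¹) p = (A.updateRow p r).det / A.det := by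
  rw [← cramer_transpose_apply, cramer_eq_adjugate_mulVec, ← adjugate_transpose, mulVec_transpose,
    Matrix.inv_def, vecMul_smul, Ring.inverse_eq_inv', Pi.smul_apply, smul_eq_mul, inv_mul_eq_div]

/- Changing `k` rows is a rank `k` perturbation, so the Weinstein–Aronszajn identity reduces the
determinant to size `k`. -/
lemma det_extend_div_det {e : κ → n} (he : Function.Injective e)
    (r : κ → n → K) {A : Matrix n n K} (hA : A.det ≠ 0) :
    (of (Function.extend e r A.row)).det / A.det =
      (of fun i j => (A.updateRow (e j) (r i)).det / A.det).det := by
  have hunit : IsUnit A.det := isUnit_iff_ne_zero.2 hA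
  have hid : A.submatrix e id * A⁻¹ * (1 : Matrix n n K).submatrix id e = 1 := by
    calc
      _ = (A * A⁻¹).submatrix e e := by
        ext i j
        simp [mul_apply, one_apply]
      _ = 1 := by rw [mul_nonsing_inv _ hunit, submatrix_one _ he]
  rw [of_extend_eq_add_mul he, det_add_mul _ _ hunit, mul_div_cancel_left₀ _ hA]
  congr 1
  rw [Matrix.sub_mul, Matrix.sub_mul, hid, add_sub_cancel]
  ext i j
  rw [of_apply, ← vecMul_inv_apply]
  simp [mul_apply, one_apply, vecMul, dotProduct]

/-- The alternant `det (φ_j(x_i))` of the functions `φ_j = fun z => φ z j` at the points `x_i`;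
both the numerator and the denominator of a Bessel function are of this form. -/
def alternant (φ : α → n → K) (x : n → α) : K :=
  (of fun i => φ (x i)).det

lemma alternant_extend_div_alternant {e : κ → n} (he : Function.Injective e) (φ : α → n → K)
    (y : κ → α) {x : n → α} (hx : alternant φ x ≠ 0) :
    alternant φ (Function.extend e y x) / alternant φ x =
      (of fun i j => alternant φ (Function.update x (e j) (y i)) / alternant φ x).det := by
  have hextend : (fun p => φ (Function.extend e y x p)) =
      Function.extend e (fun i => φ (y i)) fun p => φ (x p) :=
    funext fun p => Function.apply_extend φ e x p
  have hupdate (i : κ) (j : κ) : (fun p => φ (Function.update x (e j) (y i) p)) =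
      Function.update (fun p => φ (x p)) (e j) (φ (y i)) :=
    Function.comp_update φ x (e j) (y i)
  simp only [alternant, hextend, hupdate]
  exact det_extend_div_det he _ hx

lemma det_mul_mul (p q : n → R) (M : n → n → R) :
    (of fun i j => p i * (q j * M i j)).det = (∏ i, p i) * (∏ j, q j) * (of M).det := by
  rw [mul_assoc, ← det_mul_row, ← det_mul_column]
  rfl

end Alternant

section Vandermonde

open Matrix Polynomial

variable {K κ : Type*} [Field K] [Fintype κ] [DecidableEq κ] {n : ℕ}

lemma sum_eval_basis_mul_pow {v : Fin n → K} (hv : Function.Injective v) (x : K) (j : Fin n) :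
    ∑ l, (Lagrange.basis Finset.univ v l).eval x * v l ^ (j : ℕ) = x ^ (j : ℕ) := by
  have hdegree : (X ^ (j : ℕ) : K[X]).degree < (Finset.univ : Finset (Fin n)).card := by
    simp
  have hinterp := congrArg (eval x) (Lagrange.eq_interpolate hv.injOn hdegree)
  simpa [Lagrange.interpolate_apply, eval_finsetSum, mul_comm] using hinterp.symm

lemma det_vandermonde_update {v : Fin n → K} (hv : Function.Injective v) (p : Fin n) (x : K) :
    (vandermonde (Function.update v p x)).det =
      (Lagrange.basis Finset.univ v p).eval x * (vandermonde v).det := by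
  rw [← smul_eq_mul, ← det_updateRow_sum _ _ fun l => (Lagrange.basis Finset.univ v l).eval x]
  congr 1
  ext i j
  rcases eq_or_ne i p with rfl | hi
  · simp [vandermonde_apply, sum_eval_basis_mul_pow hv]
  · simp [vandermonde_apply, hi]

lemma det_vandermonde_extend_div {e : κ → Fin n} (he : Function.Injective e) {v : Fin n → K}
    (hv : Function.Injective v) {a : κ → K} (ha : ∀ i j, a i ≠ v (e j)) :
    (vandermonde (Function.extend e a v)).det / (vandermonde v).det =
      (∏ i, (Lagrange.nodal Finset.univ v).eval (a i)) *
        (∏ j, Lagrange.nodalWeight Finset.univ v (e j)) *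
        (of fun i j => (a i - v (e j))⁻¹).det := by
  have hv0 : (vandermonde v).det ≠ 0 := det_vandermonde_ne_zero_iff.2 hv
  rw [← det_mul_mul]
  refine (alternant_extend_div_alternant he (fun z (j : Fin n) => z ^ (j : ℕ)) a hv0).trans ?_
  congr 2 with i j
  exact (div_eq_iff hv0).2 <| (det_vandermonde_update hv (e j) (a i)).trans <|
    congrArg (· * _) (Lagrange.eval_basis_not_at_node (Finset.mem_univ _) (ha i j))

lemma prod_prod_Ioi_neg_one (R : Type*) [CommRing R] (k : ℕ) :
    ∏ i : Fin k, ∏ _j ∈ Finset.Ioi i, (-1 : R) = (-1) ^ (k * (k - 1) / 2) := by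
  simp only [Finset.prod_const, Fin.card_Ioi, Finset.prod_pow_eq_pow_sum]
  rw [Fin.sum_univ_eq_sum_range (fun i => k - 1 - i), Finset.sum_range_reflect (fun i => i),
    Finset.sum_range_id]

lemma prod_nodalWeight_univ (v : Fin n → K) :
    ∏ i, Lagrange.nodalWeight Finset.univ v i =
      (-1) ^ (n * (n - 1) / 2) / (vandermonde v).det ^ 2 := by
  have hoffdiag : ∏ i, ∏ j ∈ Finset.univ.erase i, (v i - v j) =
      (-1) ^ (n * (n - 1) / 2) * (vandermonde v).det ^ 2 := by
    simp only [← Finset.compl_singleton]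
    rw [← Finset.prod_prod_Ioi_mul_eq_prod_prod_off_diag fun j i => v i - v j,
      ← prod_prod_Ioi_neg_one, det_vandermonde, sq]
    simp only [← Finset.prod_mul_distrib]
    exact Finset.prod_congr rfl fun i _ => Finset.prod_congr rfl fun j _ => by ring
  simp only [Lagrange.nodalWeight, Finset.prod_inv_distrib, hoffdiag, mul_inv, ← inv_pow,
    inv_neg_one, div_eq_mul_inv]

theorem det_cauchy {a b : Fin n → K} (hb : Function.Injective b) (hab : ∀ i j, a i ≠ b j) :
    (of fun i j => (a i - b j)⁻¹).det =
      (-1) ^ (n * (n - 1) / 2) * ((vandermonde a).det * (vandermonde b).det) /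
        ∏ i, ∏ j, (a i - b j) := by
  have hb0 : (vandermonde b).det ≠ 0 := det_vandermonde_ne_zero_iff.2 hb
  have hprod : ∏ i, ∏ j, (a i - b j) ≠ 0 :=
    Finset.prod_ne_zero_iff.2 fun i _ => Finset.prod_ne_zero_iff.2 fun j _ =>
      sub_ne_zero.2 (hab i j)
  have hext := det_vandermonde_extend_div Function.injective_id hb hab
  simp only [Function.extend_id, id, Lagrange.eval_nodal, prod_nodalWeight_univ] at hext
  rw [div_eq_iff hb0] at hext
  rw [eq_div_iff hprod, hext]
  field_simp
  rw [pow_right_comm, neg_one_sq, one_pow, mul_one]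

end Vandermonde

lemma prod_ne_mul_prod_diag {κ M : Type*} [Fintype κ] [DecidableEq κ] [CommMonoid M]
    (f : κ → κ → M) :
    (∏ p : κ × κ, if p.1 ≠ p.2 then f p.1 p.2 else 1) * ∏ i, f i i = ∏ i, ∏ j, f i j := by
  rw [Fintype.prod_prod_type, ← Finset.prod_mul_distrib]
  refine Finset.prod_congr rfl fun i _ => ?_
  rw [← Finset.prod_filter, Finset.filter_ne, Finset.prod_erase_mul _ _ (Finset.mem_univ i)]

section Bessel

open Matrix

variable {N k : ℕ}

lemma vdm_eq_neg_one_pow_mul_det_vandermonde (a : Fin N → ℂ) :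
    vdm a = (-1) ^ (N * (N - 1) / 2) * (vandermonde a).det := by
  rw [det_vandermonde, ← prod_prod_Ioi_neg_one, vdm, Fintype.prod_prod_type]
  simp only [← Finset.prod_mul_distrib, ← Finset.prod_filter, Finset.filter_lt_eq_Ioi]
  exact Finset.prod_congr rfl fun i _ => Finset.prod_congr rfl fun j _ => by ring

lemma vdm_ne_zero_iff {a : Fin N → ℂ} : vdm a ≠ 0 ↔ Function.Injective a := by
  rw [vdm_eq_neg_one_pow_mul_det_vandermonde, ← det_vandermonde_ne_zero_iff]
  simp

lemma vdm_mul_vdm (a b : Fin N → ℂ) :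
    vdm a * vdm b = (vandermonde a).det * (vandermonde b).det := by
  rw [vdm_eq_neg_one_pow_mul_det_vandermonde, vdm_eq_neg_one_pow_mul_det_vandermonde,
    mul_mul_mul_comm, ← mul_pow, neg_one_mul, neg_neg, one_pow, one_mul]

lemma vdm_div_vdm (a b : Fin N → ℂ) :
    vdm a / vdm b = (vandermonde a).det / (vandermonde b).det := by
  rw [vdm_eq_neg_one_pow_mul_det_vandermonde, vdm_eq_neg_one_pow_mul_det_vandermonde,
    mul_div_mul_left _ _ (pow_ne_zero _ (neg_ne_zero.2 one_ne_zero))]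

lemma mvBessel_eq_alternant (a b : Fin N → ℂ) :
    mvBessel a b =
      vdm (rhoC N) * alternant (fun z j => cexp (z * b j)) a / (vdm a * vdm b) :=
  rfl

lemma rhoC_injective (N : ℕ) : Function.Injective (rhoC N) := fun _ _ hij =>
  Fin.ext (Nat.cast_injective (sub_right_injective hij))

lemma mvBessel_ne_zero_iff {a b : Fin N → ℂ} :
    mvBessel a b ≠ 0 ↔ alternant (fun z j => cexp (z * b j)) a ≠ 0 ∧
      Function.Injective a ∧ Function.Injective b := by
  have hrho := vdm_ne_zero_iff.2 (rhoC_injective N)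
  simp only [mvBessel_eq_alternant, div_ne_zero_iff, mul_ne_zero_iff, vdm_ne_zero_iff, hrho,
    ne_eq, not_false_eq_true, true_and]

lemma mvBessel_div_mvBessel (f : Fin N → ℂ) {χ lam : Fin N → ℂ} (hlam : Function.Injective lam) :
    mvBessel f lam / mvBessel χ lam =
      (alternant (fun z j => cexp (z * lam j)) f / alternant (fun z j => cexp (z * lam j)) χ) /
        ((vandermonde f).det / (vandermonde χ).det) := by
  rw [mvBessel_eq_alternant, mvBessel_eq_alternant, div_div_div_comm,
    mul_div_mul_left _ _ (vdm_ne_zero_iff.2 (rhoC_injective N)),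
    mul_div_mul_right _ _ (vdm_ne_zero_iff.2 hlam), vdm_div_vdm]

lemma alternant_exp_rhoC_ne_zero {lam : Fin N → ℂ}
    (hlam : Function.Injective fun j => cexp (lam j)) :
    alternant (fun z j => cexp (z * lam j)) (rhoC N) ≠ 0 := by
  have hmatrix : (of fun i j => cexp (rhoC N i * lam j)) =
      (vandermonde fun j => cexp (lam j))ᵀ.submatrix Fin.revPerm id := by
    ext i j
    have hi : rhoC N i = (Fin.rev i : ℕ) := by
      rw [Fin.val_rev, Nat.cast_sub i.isLt, rhoC]
      push_cast
      ring
    simp [hi, vandermonde_apply, ← Complex.exp_nat_mul]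
  rw [alternant, hmatrix, det_permute, det_transpose]
  exact mul_ne_zero (by simp) (det_vandermonde_ne_zero_iff.2 hlam)

lemma mvBessel_rhoC_ne_zero {lam : Fin N → ℂ} (hlam : Function.Injective fun j => cexp (lam j)) :
    mvBessel (rhoC N) lam ≠ 0 :=
  mvBessel_ne_zero_iff.2 ⟨alternant_exp_rhoC_ne_zero hlam, rhoC_injective N, hlam.of_comp⟩

lemma alternant_exp_update_div_alternant {χ lam : Fin N → ℂ} (hχ : Function.Injective χ)
    (hlam : Function.Injective lam) {x : ℂ} (hx : ∀ p, x ≠ χ p) (q : Fin N) :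
    alternant (fun z j => cexp (z * lam j)) (Function.update χ q x) /
        alternant (fun z j => cexp (z * lam j)) χ =
      (Lagrange.nodal Finset.univ χ).eval x * (Lagrange.nodalWeight Finset.univ χ q *
        ((x - χ q)⁻¹ * (mvBessel (Function.update χ q x) lam / mvBessel χ lam))) := by
  have hV : (vandermonde χ).det ≠ 0 := det_vandermonde_ne_zero_iff.2 hχ
  have hnodal : (Lagrange.nodal Finset.univ χ).eval x ≠ 0 :=
    Lagrange.eval_nodal_not_at_node fun p _ => hx p
  have hweight : Lagrange.nodalWeight Finset.univ χ q ≠ 0 :=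
    Lagrange.nodalWeight_ne_zero hχ.injOn (Finset.mem_univ _)
  have hsub : x - χ q ≠ 0 := sub_ne_zero.2 (hx q)
  rw [mvBessel_div_mvBessel _ hlam, det_vandermonde_update hχ, mul_div_cancel_right₀ _ hV,
    Lagrange.eval_basis_not_at_node (Finset.mem_univ _) (hx q)]
  field_simp

/- The row and column factors of the two `k × k` determinants, coming from the barycentric form
of the Lagrange basis, are the same and cancel. -/
lemma mvBessel_extend_div_mvBessel {κ : Type*} [Fintype κ] [DecidableEq κ] {e : κ → Fin N}
    (he : Function.Injective e) {χ lam : Fin N → ℂ} (hχ : mvBessel χ lam ≠ 0) {a : κ → ℂ}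
    (ha : ∀ i p, a i ≠ χ p) :
    mvBessel (Function.extend e a χ) lam / mvBessel χ lam =
      (of fun i j => (a i - χ (e j))⁻¹ *
        (mvBessel (Function.update χ (e j) (a i)) lam / mvBessel χ lam)).det /
      (of fun i j => (a i - χ (e j))⁻¹).det := by
  obtain ⟨hD, hχinj, hlam⟩ := mvBessel_ne_zero_iff.1 hχ
  have hnodal : ∏ i, (Lagrange.nodal Finset.univ χ).eval (a i) ≠ 0 :=
    Finset.prod_ne_zero_iff.2 fun i _ => Lagrange.eval_nodal_not_at_node fun p _ => ha i p
  have hweight : ∏ j, Lagrange.nodalWeight Finset.univ χ (e j) ≠ 0 :=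
    Finset.prod_ne_zero_iff.2 fun j _ =>
      Lagrange.nodalWeight_ne_zero hχinj.injOn (Finset.mem_univ _)
  rw [mvBessel_div_mvBessel _ hlam, alternant_extend_div_alternant he _ a hD,
    det_vandermonde_extend_div he hχinj fun i j => ha i (e j)]
  simp only [alternant_exp_update_div_alternant hχinj hlam (ha _)]
  rw [det_mul_mul, mul_div_mul_left _ _ (mul_ne_zero hnodal hweight)]

lemma perturbMany_eq_extend {e : Fin k → Fin N} (he : Function.Injective e) (a : Fin k → ℂ) :
    perturbMany a e = Function.extend e a (rhoC N) := by
  ext p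
  by_cases hp : ∃ m, e m = p
  · obtain ⟨m, rfl⟩ := hp
    simp [perturbMany, he.extend_apply, he.eq_iff]
  · rw [Function.extend_apply' _ _ _ hp]
    simp [perturbMany, not_exists.1 hp]

theorem determinantal_reduction_for_multivariate_Bessel_general {e : Fin k → Fin N}
    (he : Function.Injective e) {χ lam : Fin N → ℂ} (hχ : mvBessel χ lam ≠ 0) {a : Fin k → ℂ}
    (ha_inj : Function.Injective a) (ha_avoid : ∀ m p, a m ≠ χ p) :
    mvBessel (Function.extend e a χ) lam / mvBessel χ lam =
      (-1 : ℂ) ^ (k * (k - 1) / 2) *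
        ((∏ p : Fin k × Fin k, if p.1 ≠ p.2 then a p.1 - χ (e p.2) else 1) /
          (vdm a * vdm (fun m => χ (e m)))) *
        (of fun i j : Fin k => (a i - χ (e i)) / (a i - χ (e j)) *
          (mvBessel (Function.update χ (e j) (a i)) lam / mvBessel χ lam)).det := by
  have hb_inj := (mvBessel_ne_zero_iff.1 hχ).2.1.comp he
  have hvdm_a : vdm a ≠ 0 := vdm_ne_zero_iff.2 ha_inj
  have hvdm_b : vdm (fun m => χ (e m)) ≠ 0 := vdm_ne_zero_iff.2 hb_inj
  have hcauchy := det_cauchy (b := fun m => χ (e m)) hb_inj fun i j => ha_avoid i (e j)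
  rw [← vdm_mul_vdm, ← prod_ne_mul_prod_diag] at hcauchy
  set D := (of fun i j => (a i - χ (e j))⁻¹ *
    (mvBessel (Function.update χ (e j) (a i)) lam / mvBessel χ lam)).det with hD
  have hdiag : (of fun i j => (a i - χ (e i)) / (a i - χ (e j)) *
      (mvBessel (Function.update χ (e j) (a i)) lam / mvBessel χ lam)).det =
      (∏ i, (a i - χ (e i))) * D := by
    rw [hD, ← det_mul_column]
    simp only [of_apply, div_eq_mul_inv, mul_assoc]
  rw [mvBessel_extend_div_mvBessel he hχ ha_avoid, ← hD, hcauchy, hdiag]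
  field_simp
  rw [pow_right_comm, neg_one_sq, one_pow, mul_one]

end Bessel

/-- Determinantal reduction for multivariate Bessel functions with k
perturbed coordinates.  Here `e : Fin k → Fin N` is strictly monotone, so that the
removed staircase values `b m = N - 1 - e m` satisfy `b 0 > b 1 > ⋯ > b (k-1)`, and
`μ_{a_i, b_j} = Function.update (rhoC N) (e j) (a i)`. -/
theorem determinantal_reduction_for_multivariate_Bessel
    (N k : ℕ) (a : Fin k → ℂ) (e : Fin k → Fin N) (he : StrictMono e)
    (ha_inj : Function.Injective a) (ha_avoid : ∀ m : Fin k, ∀ i : Fin N, a m ≠ rhoC N i)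
    (lam : Fin N → ℝ) (hlam : Function.Injective lam) :
    mvBessel (perturbMany a e) (fun i => (lam i : ℂ)) /
        mvBessel (rhoC N) (fun i => (lam i : ℂ)) =
      (-1 : ℂ) ^ (k * (k - 1) / 2) *
        ((∏ p : Fin k × Fin k, if p.1 ≠ p.2 then a p.1 - rhoC N (e p.2) else 1) /
          (vdm a * vdm (fun m => rhoC N (e m)))) *
        Matrix.det (Matrix.of fun i j : Fin k =>
          (a i - rhoC N (e i)) / (a i - rhoC N (e j)) *
            (mvBessel (Function.update (rhoC N) (e j) (a i)) (fun i' => (lam i' : ℂ)) /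
              mvBessel (rhoC N) (fun i' => (lam i' : ℂ)))) := by
  have hexp : Function.Injective fun j => cexp (lam j) := fun i j hij =>
    hlam (Real.exp_injective (by simpa only [← ofReal_exp, ofReal_inj] using hij))
  rw [perturbMany_eq_extend he.injective]
  exact determinantal_reduction_for_multivariate_Bessel_general he.injective
    (mvBessel_rhoC_ne_zero hexp) ha_inj ha_avoid

end GS
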